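/- Let η = (η^1, …, η^k) be a smooth ℝ^k-valued differential one-form on an open set U ⊆ ℝ^m with Reeb vector fields R_1, …, R_k, and let X_h, X_f be η-Hamiltonian vector fields with η-Hamiltonian k-functions h = (h^1,…,h^k) and f = (f^1,…,f^k). Then η^α([X_h, X_f]) = 0 on U for all α if and only if X_hf^α = −Σ_{β=1}^k f^β·(R_βh^α) on U for all α, i.e. the k-contact bracket {h, f}_η vanishes exactly when f is a dissipated k-contact k-function for (U, η, h): X_h f = −R_f h. -/

import Mathlib

/-- Lie bracket of vector fields: `[X, Y](x) = DY(x)(X(x)) − DX(x)(Y(x))`. -/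
noncomputable def lieBr {E : Type*} [NormedAddCommGroup E] [NormedSpace ℝ E]
    (X Y : E → E) : E → E :=
  fun x => fderiv ℝ Y x (X x) - fderiv ℝ X x (Y x)

/-- Exterior derivative of a one-form: `dθ_x(u, v) = Dθ(x)(u)(v) − Dθ(x)(v)(u)`. -/
noncomputable def extD {E : Type*} [NormedAddCommGroup E] [NormedSpace ℝ E]
    (θ : E → (E →L[ℝ] ℝ)) (x u v : E) : ℝ :=
  fderiv ℝ θ x u v - fderiv ℝ θ x v u

/-!
For a one-form `θ` and vector fields `X`, `Y`, Cartan's formula reads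
`dθ(X, Y) = X(θ(Y)) − Y(θ(X)) − θ([X, Y])`. Taking `θ = η^α`, `X = X_h`, `Y = X_f`, the first
Hamilton equations turn this into `η^α([X_h, X_f]) = −X_h f^α + X_f h^α − dη^α(X_h, X_f)`. The
second Hamilton equation for `X_h`, evaluated at `X_f`, says that the last two terms add up to
`Σ_β (R_β h^α) η^β(X_f) = −Σ_β f^β R_β h^α`.
-/

section

open scoped Topology

variable {E ι : Type*} [NormedAddCommGroup E] [NormedSpace ℝ E] {x : E} {X Y : E → E}

theorem extD_apply_vectorField {θ : E → E →L[ℝ] ℝ} (hθ : DifferentiableAt ℝ θ x)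
    (hX : DifferentiableAt ℝ X x) (hY : DifferentiableAt ℝ Y x) :
    extD θ x (X x) (Y x) =
      fderiv ℝ (fun y ↦ θ y (Y y)) x (X x) - fderiv ℝ (fun y ↦ θ y (X y)) x (Y x) -
        θ x (lieBr X Y x) := by
  simp only [extD, lieBr, fderiv_clm_apply hθ hX, fderiv_clm_apply hθ hY,
    add_apply, ContinuousLinearMap.comp_apply, ContinuousLinearMap.flip_apply, map_sub]
  ring

theorem apply_lieBr_of_apply_eq_neg {θ : E → E →L[ℝ] ℝ} {g f : E → ℝ}
    (hθ : DifferentiableAt ℝ θ x) (hX : DifferentiableAt ℝ X x) (hY : DifferentiableAt ℝ Y x)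
    (hXg : ∀ᶠ y in 𝓝 x, θ y (X y) = -g y) (hYf : ∀ᶠ y in 𝓝 x, θ y (Y y) = -f y) :
    θ x (lieBr X Y x) =
      -fderiv ℝ f x (X x) + (fderiv ℝ g x (Y x) - extD θ x (X x) (Y x)) := by
  have hdX : fderiv ℝ (fun y ↦ θ y (X y)) x = -fderiv ℝ g x :=
    (Filter.EventuallyEq.fderiv_eq hXg).trans fderiv_fun_neg
  have hdY : fderiv ℝ (fun y ↦ θ y (Y y)) x = -fderiv ℝ f x :=
    (Filter.EventuallyEq.fderiv_eq hYf).trans fderiv_fun_neg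
  rw [extD_apply_vectorField hθ hX hY, hdX, hdY]
  simp only [neg_apply]
  ring

variable [Fintype ι]

theorem apply_lieBr_of_hamiltonian {η : ι → E → E →L[ℝ] ℝ} {R : ι → E → E} {h f : ι → E → ℝ}
    {α : ι} (hη : DifferentiableAt ℝ (η α) x) (hX : DifferentiableAt ℝ X x)
    (hY : DifferentiableAt ℝ Y x) (hXh : ∀ᶠ y in 𝓝 x, η α y (X y) = -h α y)
    (hdX : ∀ v, extD (η α) x (X x) v =
      fderiv ℝ (h α) x v - ∑ β, fderiv ℝ (h α) x (R β x) * η β x v)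
    (hYf : ∀ᶠ y in 𝓝 x, ∀ β, η β y (Y y) = -f β y) :
    η α x (lieBr X Y x) =
      -(fderiv ℝ (f α) x (X x) + ∑ β, f β x * fderiv ℝ (h α) x (R β x)) := by
  have hsum : ∑ β, fderiv ℝ (h α) x (R β x) * η β x (Y x) =
      -∑ β, f β x * fderiv ℝ (h α) x (R β x) := by
    simp only [hYf.self_of_nhds, mul_neg, Finset.sum_neg_distrib, mul_comm (f _ x)]
  rw [apply_lieBr_of_apply_eq_neg hη hX hY hXh (hYf.mono fun _ hy ↦ hy α), hdX, sub_sub_cancel,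
    hsum, neg_add]

theorem stmt_10_general {U : Set E} (hU : IsOpen U) {η : ι → E → E →L[ℝ] ℝ}
    (hη : ∀ α, DifferentiableOn ℝ (η α) U) (R : ι → E → E) {Xh Xf : E → E}
    (hXh : DifferentiableOn ℝ Xh U) (hXf : DifferentiableOn ℝ Xf U) {h f : ι → E → ℝ}
    (hHamh : ∀ x ∈ U, ∀ α,
      η α x (Xh x) = -h α x ∧
      ∀ v, extD (η α) x (Xh x) v =
        fderiv ℝ (h α) x v - ∑ β, fderiv ℝ (h α) x (R β x) * η β x v)
    (hηXf : ∀ x ∈ U, ∀ α, η α x (Xf x) = -f α x) :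
    (∀ x ∈ U, ∀ α, η α x (lieBr Xh Xf x) = 0) ↔
      ∀ x ∈ U, ∀ α,
        fderiv ℝ (f α) x (Xh x) = -∑ β, f β x * fderiv ℝ (h α) x (R β x) := by
  refine forall₃_congr fun x hx α ↦ ?_
  have hUx : U ∈ 𝓝 x := hU.mem_nhds hx
  rw [apply_lieBr_of_hamiltonian ((hη α).differentiableAt hUx) (hXh.differentiableAt hUx)
    (hXf.differentiableAt hUx) (Filter.eventually_of_mem hUx fun y hy ↦ (hHamh y hy α).1)
    (hHamh x hx α).2 (Filter.eventually_of_mem hUx hηXf), neg_eq_zero, add_eq_zero_iff_eq_neg]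

end

/-- **Dissipated quantities are those that η-commute with the Hamiltonian.** Let
`X_h, X_f` be `η`-Hamiltonian vector fields with `η`-Hamiltonian k-functions
`h, f` relative to a smooth `ℝ^k`-valued one-form `η` on an open `U ⊆ ℝ^m` with
Reeb vector fields `R_1, …, R_k`. Then `η^α([X_h, X_f]) = 0` on `U` for all `α`
if and only if `X_hf^α = −Σ_β f^β·(R_βh^α)` on `U` for all `α`, i.e. `f` is a
dissipated k-contact k-function for `(U, η, h)`: `X_hf = −R_fh`. -/
theorem stmt_10 (m k : ℕ) (U : Set (Fin m → ℝ)) (hU : IsOpen U)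
    (η : Fin k → (Fin m → ℝ) → ((Fin m → ℝ) →L[ℝ] ℝ))
    (hη : ∀ α, ContDiffOn ℝ (⊤ : ℕ∞) (η α) U)
    (R : Fin k → (Fin m → ℝ) → (Fin m → ℝ))
    (hRs : ∀ α, ContDiffOn ℝ (⊤ : ℕ∞) (R α) U)
    (hReeb : ∀ x ∈ U, ∀ α β : Fin k,
      η β x (R α x) = (if α = β then (1 : ℝ) else 0) ∧
      ∀ v, extD (η β) x (R α x) v = 0)
    (Xh Xf : (Fin m → ℝ) → (Fin m → ℝ))
    (hXh : ContDiffOn ℝ (⊤ : ℕ∞) Xh U) (hXf : ContDiffOn ℝ (⊤ : ℕ∞) Xf U)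
    (h f : Fin k → (Fin m → ℝ) → ℝ)
    (hhs : ∀ α, ContDiffOn ℝ (⊤ : ℕ∞) (h α) U)
    (hfs : ∀ α, ContDiffOn ℝ (⊤ : ℕ∞) (f α) U)
    (hHamh : ∀ x ∈ U, ∀ α : Fin k,
      η α x (Xh x) = -(h α x) ∧
      ∀ v, extD (η α) x (Xh x) v =
        fderiv ℝ (h α) x v - ∑ β, fderiv ℝ (h α) x (R β x) * η β x v)
    (hHamf : ∀ x ∈ U, ∀ α : Fin k,
      η α x (Xf x) = -(f α x) ∧
      ∀ v, extD (η α) x (Xf x) v =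
        fderiv ℝ (f α) x v - ∑ β, fderiv ℝ (f α) x (R β x) * η β x v) :
    (∀ x ∈ U, ∀ α : Fin k, η α x (lieBr Xh Xf x) = 0) ↔
      (∀ x ∈ U, ∀ α : Fin k,
        fderiv ℝ (f α) x (Xh x) = -∑ β, f β x * fderiv ℝ (h α) x (R β x)) := by
  exact stmt_10_general hU (fun α ↦ (hη α).differentiableOn (by simp)) R
    (hXh.differentiableOn (by simp)) (hXf.differentiableOn (by simp)) hHamh
    fun x hx α ↦ (hHamf x hx α).1
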